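/- For every t > 0 and every v₀ > 0, one has ∫_{(0,v₀]} v² μ^{ℓ,r}_t(dv) ≤ (2·E[R^γ]/(γ(γ−1)(2−γ)))·t·v₀^{2−γ}. -/

import Mathlib

open MeasureTheory Filter Set
open scoped ENNReal NNReal Topology

noncomputable section

/-- `ℓ_t(s,u)`: the length of the interval `[s,s+u] ∩ [0,t]`. -/
def ellK (t s u : ℝ) : ℝ := max 0 (min (s + u) t - max s 0)

/-- The intensity measure `u^{-γ-1} du` on `(0,∞)`. -/
def muU (γ : ℝ) : Measure ℝ :=
  (volume.restrict (Set.Ioi 0)).withDensity fun u => ENNReal.ofReal (u ^ (-γ - 1))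

/-- The measure `μ^ℓ_t` on `(0,∞)`:
`μ^ℓ_t(A) = ∫_ℝ ∫_0^∞ 1{ℓ_t(s,u) ∈ A} u^{-γ-1} du ds`. -/
def muEll (γ t : ℝ) : Measure ℝ :=
  (Measure.map (fun p : ℝ × ℝ => ellK t p.1 p.2)
    ((volume : Measure ℝ).prod (muU γ))).restrict (Set.Ioi 0)

/-- The measure `μ^{ℓ,r}_t` on `(0,∞)`:
`μ^{ℓ,r}_t(A) = ∫_{(0,∞)} ∫_{(0,∞)} 1{rℓ ∈ A} μ^ℓ_t(dℓ) F_R(dr)`. -/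
def muEllR (γ t : ℝ) (FR : Measure ℝ) : Measure ℝ :=
  (Measure.map (fun p : ℝ × ℝ => p.1 * p.2) (FR.prod (muEll γ t))).restrict (Set.Ioi 0)

/-- The measure `ν` on `[0,1]`: density `s^{-(γ+1)} + ((2-γ)/γ)·s^{-γ}` on `(0,1)` with
respect to Lebesgue measure, together with an atom of mass `1/(γ(γ-1))` at the point `1`. -/
def nuM (γ : ℝ) : Measure ℝ :=
  (volume.restrict (Set.Ioo 0 1)).withDensity
      (fun s => ENNReal.ofReal (s ^ (-(γ + 1)) + (2 - γ) / γ * s ^ (-γ)))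
    + (Real.toNNReal (1 / (γ * (γ - 1)))) • Measure.dirac 1

instance nuM.sigmaFinite (γ : ℝ) : SigmaFinite (nuM γ) := by
  unfold nuM; infer_instance

end

/-!
Since `ℓ_t(s,u) ≤ u`, truncation at level `x` gives `ℓ² 1{0 < ℓ ≤ x} ≤ min(u, x) ℓ`. The factor
`min(u, x)` is free of `s`, and `∫ ℓ_t(s,u) ds = u t` by Tonelli, so the truncated second moment
of `μ^ℓ_t` is at most `t ∫_0^∞ min(u, x) u^{-γ} du = t x^{2-γ} / ((γ-1)(2-γ))`. For
`μ^{ℓ,r}_t` the truncation level becomes `v₀ / r`, and `r² (v₀ / r)^{2-γ} = r^γ v₀^{2-γ}`.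
Finally `γ < 2` makes the factor `2 / γ` in the stated constant larger than `1`.
-/

section PowerIntegrals

variable {a x : ℝ}

lemma lintegral_Ioc_zero_rpow (ha : -1 < a) (hx : 0 ≤ x) :
    ∫⁻ u in Ioc 0 x, ENNReal.ofReal (u ^ a) = ENNReal.ofReal (x ^ (a + 1) / (a + 1)) := by
  have integrable_rpow : IntegrableOn (fun u : ℝ => u ^ a) (Ioc 0 x) :=
    (intervalIntegrable_iff_integrableOn_Ioc_of_le hx).1
      (intervalIntegral.intervalIntegrable_rpow' ha)
  rw [← ofReal_integral_eq_lintegral_ofReal integrable_rpow,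
    ← intervalIntegral.integral_of_le hx, integral_rpow (Or.inl ha),
    Real.zero_rpow (by linarith), sub_zero]
  filter_upwards [ae_restrict_mem measurableSet_Ioc] with u hu
  exact Real.rpow_nonneg hu.1.le a

lemma lintegral_Ioi_rpow_of_lt (ha : a < -1) (hx : 0 < x) :
    ∫⁻ u in Ioi x, ENNReal.ofReal (u ^ a) = ENNReal.ofReal (-x ^ (a + 1) / (a + 1)) := by
  rw [← ofReal_integral_eq_lintegral_ofReal (integrableOn_Ioi_rpow_of_lt ha hx),
    integral_Ioi_rpow_of_lt ha hx]
  filter_upwards [ae_restrict_mem measurableSet_Ioi] with u hu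
  exact Real.rpow_nonneg (hx.trans hu).le a

lemma lintegral_Ioi_min_mul_rpow_neg (ha₁ : 1 < a) (ha₂ : a < 2) (hx : 0 < x) :
    ∫⁻ u in Ioi 0, ENNReal.ofReal (min u x * u ^ (-a)) =
      ENNReal.ofReal (x ^ (2 - a) / ((a - 1) * (2 - a))) := by
  have below : ∫⁻ u in Ioc 0 x, ENNReal.ofReal (min u x * u ^ (-a)) =
      ENNReal.ofReal (x ^ (2 - a) / (2 - a)) := by
    rw [show 2 - a = (1 - a) + 1 by ring, ← lintegral_Ioc_zero_rpow (by linarith) hx.le]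
    refine setLIntegral_congr_fun measurableSet_Ioc fun u hu => ?_
    simp only [min_eq_left hu.2, sub_eq_add_neg, Real.rpow_one_add' hu.1.le
      (show 1 + -a ≠ 0 by linarith)]
  have above : ∫⁻ u in Ioi x, ENNReal.ofReal (min u x * u ^ (-a)) =
      ENNReal.ofReal (x ^ (2 - a) / (a - 1)) := by
    calc ∫⁻ u in Ioi x, ENNReal.ofReal (min u x * u ^ (-a))
        = ∫⁻ u in Ioi x, ENNReal.ofReal x * ENNReal.ofReal (u ^ (-a)) := by
          refine setLIntegral_congr_fun measurableSet_Ioi fun u (hu : x < u) => ?_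
          simp only [min_eq_right hu.le, ENNReal.ofReal_mul hx.le]
      _ = ENNReal.ofReal (x * (-x ^ (-a + 1) / (-a + 1))) := by
          rw [lintegral_const_mul _ (by fun_prop), lintegral_Ioi_rpow_of_lt (by linarith) hx,
            ENNReal.ofReal_mul hx.le]
      _ = ENNReal.ofReal (x ^ (2 - a) / (a - 1)) := by
          rw [show 2 - a = 1 + (-a + 1) by ring, Real.rpow_one_add' hx.le (by linarith),
            mul_div_assoc, ← neg_div_neg_eq, neg_neg, neg_add, neg_neg, ← sub_eq_add_neg]
  have ha₁' : 0 < a - 1 := by linarith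
  have ha₂' : 0 < 2 - a := by linarith
  rw [← Ioc_union_Ioi_eq_Ioi hx.le,
    lintegral_union measurableSet_Ioi (Ioc_disjoint_Ioi le_rfl), below, above,
    ← ENNReal.ofReal_add (by positivity) (by positivity)]
  congr 1
  field_simp
  ring

end PowerIntegrals

lemma lintegral_measure_preimage_sub_inter {G : Type*} [AddGroup G] [MeasurableSpace G]
    [MeasurableAdd₂ G] [MeasurableNeg G] (μ ν : Measure G) [SFinite μ] [SFinite ν]
    [μ.IsAddRightInvariant] {A B : Set G} (hA : MeasurableSet A) (hB : MeasurableSet B) :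
    ∫⁻ x, ν ((fun y => x - y) ⁻¹' A ∩ B) ∂μ = μ A * ν B := by
  have shear := measurePreserving_sub_prod μ ν
  rw [← Measure.prod_prod, ← shear.measure_preimage (hA.prod hB).nullMeasurableSet,
    Measure.prod_apply (shear.measurable (hA.prod hB))]
  rfl

section OverlapLength

variable (t s u : ℝ)

lemma ofReal_ellK : ENNReal.ofReal (ellK t s u) = volume (Icc s (s + u) ∩ Icc 0 t) := by
  rw [Icc_inter_Icc, Real.volume_Icc, ellK, ENNReal.ofReal_max, ENNReal.ofReal_zero]
  exact max_eq_right zero_le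

lemma ellK_le_max : ellK t s u ≤ max 0 u :=
  max_le_max le_rfl (by linarith [min_le_left (s + u) t, le_max_left s 0])

lemma measurable_ellK : Measurable fun p : ℝ × ℝ => ellK t p.1 p.2 := by
  unfold ellK
  fun_prop

lemma lintegral_ofReal_ellK :
    ∫⁻ s, ENNReal.ofReal (ellK t s u) = ENNReal.ofReal u * ENNReal.ofReal t := by
  have volume_slice (s : ℝ) : ENNReal.ofReal (ellK t s u) =
      volume ((fun y => s - y) ⁻¹' Icc (-u) 0 ∩ Icc 0 t) := by
    rw [ofReal_ellK, preimage_const_sub_Icc, sub_zero, sub_neg_eq_add]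
  simp only [volume_slice]
  rw [lintegral_measure_preimage_sub_inter volume volume measurableSet_Icc measurableSet_Icc,
    Real.volume_Icc, Real.volume_Icc, zero_sub, neg_neg, sub_zero]

lemma indicator_Ioc_sq_ellK_le (x : ℝ) :
    (Ioc 0 x).indicator (fun l => ENNReal.ofReal (l ^ 2)) (ellK t s u) ≤
      ENNReal.ofReal (min u x) * ENNReal.ofReal (ellK t s u) := by
  refine indicator_apply_le' ?_ fun _ => zero_le
  rintro ⟨ellK_pos, ellK_le_level⟩
  have ellK_le_length : ellK t s u ≤ u :=
    (le_max_iff.1 (ellK_le_max t s u)).resolve_left ellK_pos.not_ge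
  rw [sq, ENNReal.ofReal_mul ellK_pos.le]
  gcongr
  exact le_min ellK_le_length ellK_le_level

end OverlapLength

section IntensityMeasures

variable {γ t x : ℝ} {A : Set ℝ} {f : ℝ → ℝ≥0∞}

instance muU.sFinite (γ : ℝ) : SFinite (muU γ) := by
  unfold muU
  infer_instance

instance muEll.sFinite (γ t : ℝ) : SFinite (muEll γ t) := by
  unfold muEll
  infer_instance

lemma lintegral_muU (γ : ℝ) (hf : Measurable f) :
    ∫⁻ u, f u ∂muU γ = ∫⁻ u in Ioi 0, ENNReal.ofReal (u ^ (-γ - 1)) * f u :=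
  lintegral_withDensity_eq_lintegral_mul _ (by fun_prop) hf

lemma setLIntegral_muEll (γ t : ℝ) (hA : MeasurableSet A) (hA_pos : A ⊆ Ioi 0)
    (hf : Measurable f) :
    ∫⁻ l in A, f l ∂muEll γ t = ∫⁻ u, (∫⁻ s, A.indicator f (ellK t s u)) ∂muU γ := by
  rw [muEll, Measure.restrict_restrict_of_subset hA_pos, ← lintegral_indicator hA,
    lintegral_map (hf.indicator hA) (measurable_ellK t)]
  exact lintegral_prod_symm' _ ((hf.indicator hA).comp (measurable_ellK t))

lemma lintegral_min_mul_self_muU (hγ₁ : 1 < γ) (hγ₂ : γ < 2) (hx : 0 < x) :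
    ∫⁻ u, ENNReal.ofReal (min u x) * ENNReal.ofReal u ∂muU γ =
      ENNReal.ofReal (x ^ (2 - γ) / ((γ - 1) * (2 - γ))) := by
  rw [lintegral_muU γ (by fun_prop), ← lintegral_Ioi_min_mul_rpow_neg hγ₁ hγ₂ hx]
  refine setLIntegral_congr_fun measurableSet_Ioi fun u (hu : 0 < u) => ?_
  have rpow_split : u ^ (-γ) = u ^ (-γ - 1) * u := by
    rw [← Real.rpow_add_one hu.ne', sub_add_cancel]
  rw [← ENNReal.ofReal_mul (le_min hu.le hx.le), ← ENNReal.ofReal_mul (by positivity), rpow_split]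
  congr 1
  ring

lemma setLIntegral_sq_muEll_le (hγ₁ : 1 < γ) (hγ₂ : γ < 2) (hx : 0 < x) :
    ∫⁻ l in Ioc 0 x, ENNReal.ofReal (l ^ 2) ∂muEll γ t ≤
      ENNReal.ofReal (x ^ (2 - γ) / ((γ - 1) * (2 - γ))) * ENNReal.ofReal t := by
  rw [setLIntegral_muEll γ t measurableSet_Ioc Ioc_subset_Ioi_self (by fun_prop)]
  calc ∫⁻ u, (∫⁻ s, (Ioc 0 x).indicator (fun l => ENNReal.ofReal (l ^ 2)) (ellK t s u)) ∂muU γ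
      ≤ ∫⁻ u, (∫⁻ s, ENNReal.ofReal (min u x) * ENNReal.ofReal (ellK t s u)) ∂muU γ :=
        lintegral_mono fun u => lintegral_mono fun s => indicator_Ioc_sq_ellK_le t s u x
    _ = ∫⁻ u, ENNReal.ofReal (min u x) * ENNReal.ofReal u * ENNReal.ofReal t ∂muU γ := by
        simp only [lintegral_const_mul' _ _ ENNReal.ofReal_ne_top, lintegral_ofReal_ellK, mul_assoc]
    _ = ENNReal.ofReal (x ^ (2 - γ) / ((γ - 1) * (2 - γ))) * ENNReal.ofReal t := by
        rw [lintegral_mul_const _ (by fun_prop), lintegral_min_mul_self_muU hγ₁ hγ₂ hx]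

lemma muEll_Iic_zero (γ t : ℝ) : muEll γ t (Iic 0) = 0 := by
  rw [muEll, Measure.restrict_apply measurableSet_Iic, Iic_inter_Ioi, Ioc_self, measure_empty]

lemma setLIntegral_muEllR (γ t : ℝ) (FR : Measure ℝ) [SFinite FR] (hA : MeasurableSet A)
    (hA_pos : A ⊆ Ioi 0) (hf : Measurable f) :
    ∫⁻ v in A, f v ∂muEllR γ t FR =
      ∫⁻ r in Ioi 0, ∫⁻ l in (r * ·) ⁻¹' A, f (r * l) ∂muEll γ t ∂FR := by
  have slice (r : ℝ) : ∫⁻ l, A.indicator f (r * l) ∂muEll γ t =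
      ∫⁻ l in (r * ·) ⁻¹' A, f (r * l) ∂muEll γ t :=
    lintegral_indicator (hA.preimage (measurable_const_mul r)) fun l => f (r * l)
  have slice_eq_zero (r : ℝ) (hr : r ∉ Ioi 0) :
      ∫⁻ l in (r * ·) ⁻¹' A, f (r * l) ∂muEll γ t = 0 := by
    refine setLIntegral_measure_zero _ _ (measure_mono_null ?_ (muEll_Iic_zero γ t))
    intro l hl
    have product_pos : 0 < r * l := hA_pos hl
    exact (neg_of_mul_pos_right product_pos (notMem_Ioi.1 hr)).le
  rw [muEllR, Measure.restrict_restrict_of_subset hA_pos, ← lintegral_indicator hA,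
    lintegral_map (hf.indicator hA) measurable_mul]
  refine (lintegral_prod _ ((hf.indicator hA).comp measurable_mul).aemeasurable).trans ?_
  simp only [Function.comp_apply, slice]
  rw [← lintegral_indicator measurableSet_Ioi,
    indicator_eq_self.2 (Function.support_subset_iff'.2 slice_eq_zero)]

lemma setLIntegral_sq_muEllR_le (hγ₁ : 1 < γ) (hγ₂ : γ < 2) (FR : Measure ℝ) [SFinite FR]
    (t : ℝ) {v₀ : ℝ} (hv₀ : 0 < v₀) :
    ∫⁻ v in Ioc 0 v₀, ENNReal.ofReal (v ^ 2) ∂muEllR γ t FR ≤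
      ENNReal.ofReal (v₀ ^ (2 - γ) / ((γ - 1) * (2 - γ))) * ENNReal.ofReal t *
        ∫⁻ r in Ioi 0, ENNReal.ofReal (r ^ γ) ∂FR := by
  rw [setLIntegral_muEllR γ t FR measurableSet_Ioc Ioc_subset_Ioi_self (by fun_prop),
    ← lintegral_const_mul _ (by fun_prop)]
  refine setLIntegral_mono' measurableSet_Ioi fun r (hr : 0 < r) => ?_
  have constant_nonneg : 0 ≤ v₀ ^ (2 - γ) / ((γ - 1) * (2 - γ)) :=
    div_nonneg (by positivity) (mul_nonneg (by linarith) (by linarith))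
  have scaling : r ^ 2 * (v₀ / r) ^ (2 - γ) = v₀ ^ (2 - γ) * r ^ γ := by
    rw [Real.div_rpow hv₀.le hr.le, Real.rpow_sub hr, Real.rpow_two]
    field_simp
  calc ∫⁻ l in (r * ·) ⁻¹' Ioc 0 v₀, ENNReal.ofReal ((r * l) ^ 2) ∂muEll γ t
      = ENNReal.ofReal (r ^ 2) * ∫⁻ l in Ioc 0 (v₀ / r), ENNReal.ofReal (l ^ 2) ∂muEll γ t := by
        simp only [preimage_const_mul_Ioc₀ _ _ hr, zero_div, mul_pow,
          ENNReal.ofReal_mul (sq_nonneg r), lintegral_const_mul' _ _ ENNReal.ofReal_ne_top]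
    _ ≤ ENNReal.ofReal (r ^ 2) *
          (ENNReal.ofReal ((v₀ / r) ^ (2 - γ) / ((γ - 1) * (2 - γ))) * ENNReal.ofReal t) := by
        gcongr
        exact setLIntegral_sq_muEll_le hγ₁ hγ₂ (by positivity)
    _ = ENNReal.ofReal (v₀ ^ (2 - γ) / ((γ - 1) * (2 - γ))) * ENNReal.ofReal t *
          ENNReal.ofReal (r ^ γ) := by
        rw [← mul_assoc, ← ENNReal.ofReal_mul (sq_nonneg r), ← mul_div_assoc, scaling,
          ← div_mul_eq_mul_div, ENNReal.ofReal_mul constant_nonneg, mul_right_comm]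

end IntensityMeasures

theorem stmt_12_general {γ : ℝ} (hγ₁ : 1 < γ) (hγ₂ : γ < 2) (FR : Measure ℝ) [SFinite FR]
    (moment_integrable : IntegrableOn (fun r => r ^ γ) (Ioi 0) FR)
    {t : ℝ} (ht : 0 < t) {v₀ : ℝ} (hv₀ : 0 < v₀) :
    ∫⁻ v in Ioc 0 v₀, ENNReal.ofReal (v ^ 2) ∂muEllR γ t FR ≤
      ENNReal.ofReal
        (2 * (∫ r in Ioi 0, r ^ γ ∂FR) / (γ * (γ - 1) * (2 - γ)) * t * v₀ ^ (2 - γ)) := by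
  have hγ₁' : 0 < γ - 1 := by linarith
  have hγ₂' : 0 < 2 - γ := by linarith
  have ae_rpow_nonneg : ∀ᵐ r ∂FR.restrict (Ioi 0), 0 ≤ r ^ γ :=
    (ae_restrict_mem measurableSet_Ioi).mono fun r (hr : 0 < r) => Real.rpow_nonneg hr.le γ
  have moment_nonneg : 0 ≤ ∫ r in Ioi 0, r ^ γ ∂FR := integral_nonneg_of_ae ae_rpow_nonneg
  have one_le_two_div : 1 ≤ 2 / γ := (one_le_div₀ (by linarith)).2 hγ₂.le
  refine (setLIntegral_sq_muEllR_le hγ₁ hγ₂ FR t hv₀).trans ?_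
  rw [← ofReal_integral_eq_lintegral_ofReal moment_integrable ae_rpow_nonneg,
    ← ENNReal.ofReal_mul' ht.le, ← ENNReal.ofReal_mul' moment_nonneg]
  apply ENNReal.ofReal_le_ofReal
  calc v₀ ^ (2 - γ) / ((γ - 1) * (2 - γ)) * t * ∫ r in Ioi 0, r ^ γ ∂FR
      ≤ 2 / γ * (v₀ ^ (2 - γ) / ((γ - 1) * (2 - γ)) * t * ∫ r in Ioi 0, r ^ γ ∂FR) :=
        le_mul_of_one_le_left (by positivity) one_le_two_div
    _ = 2 * (∫ r in Ioi 0, r ^ γ ∂FR) / (γ * (γ - 1) * (2 - γ)) * t * v₀ ^ (2 - γ) := by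
        field_simp

/-- For every `t > 0`, `v₀ > 0`:
`∫_{(0,v₀]} v² μ^{ℓ,r}_t(dv) ≤ (2 E[R^γ]/(γ(γ-1)(2-γ)))·t·v₀^{2-γ}`. -/
theorem stmt_12 (γ : ℝ) (hγ1 : 1 < γ) (hγ2 : γ < 2)
    (FR : Measure ℝ) [IsProbabilityMeasure FR] (hFRpos : FR (Set.Iic 0) = 0)
    (hmom : Integrable (fun r => r ^ γ) FR)
    (t : ℝ) (ht : 0 < t) (v0 : ℝ) (hv0 : 0 < v0) :
    ∫⁻ v in Set.Ioc 0 v0, ENNReal.ofReal (v ^ 2) ∂(muEllR γ t FR)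
      ≤ ENNReal.ofReal (2 * (∫ r, r ^ γ ∂FR) / (γ * (γ - 1) * (2 - γ)) * t * v0 ^ (2 - γ)) := by
  have restrict_pos : FR.restrict (Ioi 0) = FR :=
    Measure.restrict_eq_self_of_ae_mem (compl_Iic (a := (0 : ℝ)) ▸ compl_mem_ae_iff.2 hFRpos)
  simpa only [restrict_pos] using stmt_12_general hγ1 hγ2 FR hmom.integrableOn ht hv0
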